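/- For a quantum state set ρ_0,…,ρ_{M-1} with recursion X_0 = ρ_0, X_{m+1} = X_m + (ρ_{m+1} − X_m)_+ and P_C^up = Tr X_{M-1}, define (downward recursively) a_{M-1} = 1, e_m = P_≥(a_m (X_{m-1} − ρ_m) a_m†) for 1 ≤ m ≤ M−1, and a_m = e_{m+1} e_{m+2} ⋯ e_{M-1} for 0 ≤ m < M−1. Assume that for every m with 1 ≤ m ≤ M−1 the support of a_m (X_{m-1} − ρ_m) a_m† equals the support of a_m X_m a_m†. Then P_C^up = P_C^opt (the maximum success probability over M-outcome POVMs) if and only if a_m (X_{m-1} − ρ_m)_+ a_m† = (a_m (X_{m-1} − ρ_m) a_m†)_+ for every m = 1,…,M−2. -/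

import Mathlib

/-!
Write `X = X_{M-1}`, `dₘ = X_{m-1} - ρₘ`, and `A₊`, `A₋` for the positive and negative parts of `A`.
From `Xₘ = X_{m-1} + (dₘ)₋ = ρₘ + (dₘ)₊` one gets `Xₘ ≥ ρₖ` for all `k ≤ m`, so `Tr X` bounds every
success probability, and it is attained by a POVM `Π` exactly when `(X - ρₘ) Πₘ = 0` for all `m`
(complementary slackness; `slack_eq`, `psd_mul_eq_zero`).

Sufficiency (`seqPovm_value`). The sequential measurement `Πₘ = aₘ† (1 - eₘ) aₘ`, `Π₀ = a₀† a₀`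
telescopes to `∑_{k ≤ m} Πₖ = aₘ† aₘ`. The positive-part condition gives
`∑_{k ≤ m} Tr ρₖ Πₖ = Tr Xₘ aₘ† aₘ` by induction on `m`, because
`Tr eₘ aₘ dₘ aₘ† = Tr (aₘ dₘ aₘ†)₊ = Tr aₘ (dₘ)₊ aₘ†`. At `m = M - 1`, where the condition is
automatic, this is `Tr X`.

Necessity (`optimal_step`). By downward induction, for every `m` there is a POVM `Π₀, …, Πₘ` with
`Πₖ aₘ (Xₘ - ρₖ) aₘ† = 0` for all `k ≤ m`. Splitting `Xₘ - ρₖ = (X_{m-1} - ρₖ) + (dₘ)₋` for `k < m`,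
such a `Πₖ` kills `aₘ (dₘ)₋ aₘ†`, while `Πₘ` kills `aₘ (dₘ)₊ aₘ†`. As the `Πₖ` sum to `1`, these two
matrices are orthogonal, and by uniqueness of the Jordan decomposition (`matPosPart_unique`) they
are the positive and negative parts of `aₘ dₘ aₘ†`: this is the condition at `m`. To continue, merge
`Πₘ` into `Π₀`. By the support hypothesis, the matrix `aₘ (X_{m-1} - ρₖ) aₘ†`, which lies between
`0` and `aₘ Xₘ aₘ†`, factors as `aₘ dₘ aₘ† W` (`psd_range_le`). Since
`eₘ aₘ dₘ aₘ† = (aₘ dₘ aₘ†)₊`, slackness passes to `a_{m-1} = eₘ aₘ`.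
-/


open Matrix
open scoped ComplexOrder

/-- Positive part `A₊` of a Hermitian matrix (junk value `0` on non-Hermitian input). -/
noncomputable def matPosPart {n : ℕ} (A : Matrix (Fin n) (Fin n) ℂ) : Matrix (Fin n) (Fin n) ℂ :=
  if hA : A.IsHermitian then
    (hA.eigenvectorUnitary : Matrix (Fin n) (Fin n) ℂ) *
      Matrix.diagonal (fun i => if 0 < hA.eigenvalues i then (hA.eigenvalues i : ℂ) else 0) *
      star (hA.eigenvectorUnitary : Matrix (Fin n) (Fin n) ℂ)
  else 0

/-- Projection `P₍>₎(A)` onto the span of eigenvectors of positive eigenvalues. -/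
noncomputable def matProjPos {n : ℕ} (A : Matrix (Fin n) (Fin n) ℂ) : Matrix (Fin n) (Fin n) ℂ :=
  if hA : A.IsHermitian then
    (hA.eigenvectorUnitary : Matrix (Fin n) (Fin n) ℂ) *
      Matrix.diagonal (fun i => if 0 < hA.eigenvalues i then (1 : ℂ) else 0) *
      star (hA.eigenvectorUnitary : Matrix (Fin n) (Fin n) ℂ)
  else 0

/-- Projection `P₍≥₎(A)` onto the span of eigenvectors of nonnegative eigenvalues. -/
noncomputable def matProjNonneg {n : ℕ} (A : Matrix (Fin n) (Fin n) ℂ) : Matrix (Fin n) (Fin n) ℂ :=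
  if hA : A.IsHermitian then
    (hA.eigenvectorUnitary : Matrix (Fin n) (Fin n) ℂ) *
      Matrix.diagonal (fun i => if 0 ≤ hA.eigenvalues i then (1 : ℂ) else 0) *
      star (hA.eigenvectorUnitary : Matrix (Fin n) (Fin n) ℂ)
  else 0

/-- The recursion `X₀ = ρ₀`, `X_{m+1} = X_m + (ρ_{m+1} − X_m)₊`. -/
noncomputable def Xseq {n : ℕ} (ρ : ℕ → Matrix (Fin n) (Fin n) ℂ) : ℕ → Matrix (Fin n) (Fin n) ℂ
  | 0 => ρ 0
  | m + 1 => Xseq ρ m + matPosPart (ρ (m + 1) - Xseq ρ m)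

/-- Downward recursion: `aAux M ρ j = a_{M-1-j}`, with `a_{M-1} = 1` and
`a_m = e_{m+1} a_{m+1}` where `e_{m+1} = P₍≥₎(a_{m+1} (X_m − ρ_{m+1}) a_{m+1}†)`. -/
noncomputable def aAux {n : ℕ} (M : ℕ) (ρ : ℕ → Matrix (Fin n) (Fin n) ℂ) :
    ℕ → Matrix (Fin n) (Fin n) ℂ
  | 0 => 1
  | j + 1 =>
    matProjNonneg (aAux M ρ j * (Xseq ρ (M - 1 - (j + 1)) - ρ (M - 1 - j)) * (aAux M ρ j)ᴴ) *
      aAux M ρ j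

/-- `a_m = e_{m+1} e_{m+2} ⋯ e_{M-1}` with `e_m = P₍≥₎(a_m (X_{m-1} − ρ_m) a_m†)`
and `a_{M-1} = 1`. -/
noncomputable def aseq {n : ℕ} (M : ℕ) (ρ : ℕ → Matrix (Fin n) (Fin n) ℂ) (m : ℕ) :
    Matrix (Fin n) (Fin n) ℂ :=
  aAux M ρ (M - 1 - m)

/-! ### Functional calculus of a Hermitian matrix -/

variable {n : ℕ}

/-- The functional calculus `f(A) = U diag(f(λᵢ)) U†` of a Hermitian matrix `A`, in the eigenbasis
fixed by Mathlib. -/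
noncomputable def hermFun {A : Matrix (Fin n) (Fin n) ℂ} (hA : A.IsHermitian) (f : ℝ → ℝ) :
    Matrix (Fin n) (Fin n) ℂ :=
  (hA.eigenvectorUnitary : Matrix (Fin n) (Fin n) ℂ) *
    Matrix.diagonal (fun i => (f (hA.eigenvalues i) : ℂ)) *
    star (hA.eigenvectorUnitary : Matrix (Fin n) (Fin n) ℂ)

section hermFun

variable {A : Matrix (Fin n) (Fin n) ℂ}

lemma hermFun_id (hA : A.IsHermitian) : hermFun hA id = A := by
  conv_rhs => rw [hA.spectral_theorem]
  rw [Unitary.conjStarAlgAut_apply]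
  rfl

lemma hermFun_mul (hA : A.IsHermitian) (f g : ℝ → ℝ) :
    hermFun hA f * hermFun hA g = hermFun hA (fun x => f x * g x) := by
  have hU := Unitary.coe_star_mul_self hA.eigenvectorUnitary
  unfold hermFun
  calc _ = (hA.eigenvectorUnitary : Matrix (Fin n) (Fin n) ℂ) *
    Matrix.diagonal (fun i => (f (hA.eigenvalues i) : ℂ)) *
    (star (hA.eigenvectorUnitary : Matrix (Fin n) (Fin n) ℂ) * hA.eigenvectorUnitary) *
    Matrix.diagonal (fun i => (g (hA.eigenvalues i) : ℂ)) *
    star (hA.eigenvectorUnitary : Matrix (Fin n) (Fin n) ℂ) := by simp only [Matrix.mul_assoc]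
    _ = _ := by
      rw [hU, Matrix.mul_one, Matrix.mul_assoc _ (diagonal _) (diagonal _), diagonal_mul_diagonal]
      simp

lemma hermFun_sub (hA : A.IsHermitian) (f g : ℝ → ℝ) :
    hermFun hA f - hermFun hA g = hermFun hA (fun x => f x - g x) := by
  unfold hermFun
  rw [← Matrix.sub_mul, ← Matrix.mul_sub, diagonal_sub]
  simp

lemma hermFun_one (hA : A.IsHermitian) : hermFun hA (fun _ => 1) = 1 := by
  simp [hermFun]

lemma hermFun_zero (hA : A.IsHermitian) : hermFun hA (fun _ => 0) = 0 := by
  simp [hermFun]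

lemma hermFun_posSemidef (hA : A.IsHermitian) {f : ℝ → ℝ} (hf : ∀ x, 0 ≤ f x) : (hermFun hA f).PosSemidef := by
  unfold hermFun
  rw [star_eq_conjTranspose]
  apply Matrix.PosSemidef.mul_mul_conjTranspose_same
  rw [posSemidef_diagonal_iff]
  intro i
  exact_mod_cast hf _

lemma hermFun_isHermitian (hA : A.IsHermitian) (f : ℝ → ℝ) : (hermFun hA f).IsHermitian := by
  unfold hermFun
  rw [star_eq_conjTranspose]
  apply isHermitian_mul_mul_conjTranspose
  simp [Matrix.IsHermitian, diagonal_conjTranspose, Pi.star_def]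

lemma matPosPart_eq (hA : A.IsHermitian) : matPosPart A = hermFun hA (fun x => if 0 < x then x else 0) := by
  rw [matPosPart, dif_pos hA, hermFun]
  congr! 4
  split_ifs <;> simp

lemma matProjNonneg_eq (hA : A.IsHermitian) : matProjNonneg A = hermFun hA (fun x => if 0 ≤ x then 1 else 0) := by
  rw [matProjNonneg, dif_pos hA, hermFun]
  congr! 4
  split_ifs <;> simp

lemma matPosPart_posSemidef (hA : A.IsHermitian) : (matPosPart A).PosSemidef := by
  rw [matPosPart_eq hA]
  exact hermFun_posSemidef hA fun x => by split_ifs <;> linarith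

lemma matPosPart_sub_eq (hA : A.IsHermitian) : matPosPart A - A = hermFun hA (fun x => if 0 < x then 0 else -x) := by
  nth_rw 2 [← hermFun_id hA]
  rw [matPosPart_eq hA, hermFun_sub]
  congr 1; ext x; simp only [id]; split_ifs <;> simp

lemma matPosPart_sub_posSemidef (hA : A.IsHermitian) : (matPosPart A - A).PosSemidef := by
  rw [matPosPart_sub_eq hA]
  exact hermFun_posSemidef hA fun x => by split_ifs <;> linarith

lemma matPosPart_mul_sub (hA : A.IsHermitian) : matPosPart A * (matPosPart A - A) = 0 := by
  rw [matPosPart_sub_eq hA, matPosPart_eq hA, hermFun_mul, ← hermFun_zero hA]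
  congr 1; ext x; split_ifs <;> simp

lemma matProjNonneg_isHermitian (hA : A.IsHermitian) : (matProjNonneg A).IsHermitian := by
  rw [matProjNonneg_eq hA]
  exact hermFun_isHermitian hA _

lemma matProjNonneg_sq (hA : A.IsHermitian) : matProjNonneg A * matProjNonneg A = matProjNonneg A := by
  rw [matProjNonneg_eq hA, hermFun_mul]
  congr 1; ext x; split_ifs <;> simp

lemma matProjNonneg_mul (hA : A.IsHermitian) : matProjNonneg A * A = matPosPart A := by
  nth_rw 2 [← hermFun_id hA]
  rw [matProjNonneg_eq hA, matPosPart_eq hA, hermFun_mul]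
  congr 1; ext x
  rcases lt_trichotomy x 0 with h | h | h
  · simp [h.not_ge, h.le.not_gt]
  · simp [h]
  · simp [h, h.le]

end hermFun

/-! ### Products of positive semidefinite matrices -/

lemma psd_exists_sqrt {A : Matrix (Fin n) (Fin n) ℂ} (hA : A.PosSemidef) :
    ∃ B : Matrix (Fin n) (Fin n) ℂ, A = Bᴴ * B := by
  refine ⟨hermFun hA.1 Real.sqrt, ?_⟩
  rw [(hermFun_isHermitian hA.1 _).eq, hermFun_mul]
  conv_lhs => rw [← hermFun_id hA.1]
  unfold hermFun
  congr! 4 with i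
  exact_mod_cast (Real.mul_self_sqrt (hA.eigenvalues_nonneg i)).symm

lemma psd_trace_mul_eq (B C : Matrix (Fin n) (Fin n) ℂ) :
    (Bᴴ * B * (Cᴴ * C)).trace = ((B * Cᴴ)ᴴ * (B * Cᴴ)).trace := by
  rw [conjTranspose_mul, conjTranspose_conjTranspose]
  rw [← Matrix.mul_assoc, Matrix.trace_mul_comm]
  simp only [Matrix.mul_assoc]

lemma psd_trace_mul_nonneg {A B : Matrix (Fin n) (Fin n) ℂ} (hA : A.PosSemidef)
    (hB : B.PosSemidef) : 0 ≤ (A * B).trace := by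
  obtain ⟨C, rfl⟩ := psd_exists_sqrt hA
  obtain ⟨D, rfl⟩ := psd_exists_sqrt hB
  rw [psd_trace_mul_eq]
  exact (posSemidef_conjTranspose_mul_self _).trace_nonneg

lemma psd_trace_mul_re_nonneg {A B : Matrix (Fin n) (Fin n) ℂ} (hA : A.PosSemidef)
    (hB : B.PosSemidef) : 0 ≤ (A * B).trace.re :=
  (Complex.nonneg_iff.mp (psd_trace_mul_nonneg hA hB)).1

lemma psd_mul_eq_zero {A B : Matrix (Fin n) (Fin n) ℂ} (hA : A.PosSemidef)
    (hB : B.PosSemidef) (h : (A * B).trace.re = 0) : A * B = 0 := by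
  have h0 : (A * B).trace = 0 :=
    Complex.ext h (Complex.nonneg_iff.mp (psd_trace_mul_nonneg hA hB)).2.symm
  obtain ⟨C, rfl⟩ := psd_exists_sqrt hA
  obtain ⟨D, rfl⟩ := psd_exists_sqrt hB
  rw [psd_trace_mul_eq, trace_conjTranspose_mul_self_eq_zero_iff] at h0
  rw [Matrix.mul_assoc, ← Matrix.mul_assoc C, h0]
  simp

lemma mul_comm_zero {A B : Matrix (Fin n) (Fin n) ℂ} (hA : A.IsHermitian)
    (hB : B.IsHermitian) (h : A * B = 0) : B * A = 0 := by
  have := congrArg Matrix.conjTranspose h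
  simpa [hA.eq, hB.eq] using this

/-- If a positive semidefinite `P` annihilates a sum of two positive semidefinite matrices, it
annihilates the first summand. -/
lemma psd_mul_left_of_add {P B C : Matrix (Fin n) (Fin n) ℂ} (hP : P.PosSemidef)
    (hB : B.PosSemidef) (hC : C.PosSemidef) (h : P * (B + C) = 0) : P * B = 0 := by
  apply psd_mul_eq_zero hP hB
  have h1 := psd_trace_mul_re_nonneg hP hB
  have h2 := psd_trace_mul_re_nonneg hP hC
  have h3 := congrArg (fun Z => Z.trace.re) h
  simp only [Matrix.mul_add, trace_add, Complex.add_re, trace_zero, Complex.zero_re] at h3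
  linarith

/-- Uniqueness of the Jordan decomposition. With `D = Y - A₊ = Z - A₋`, one gets
`Tr D² = -Tr Y A₋ - Tr A₊ Z ≤ 0`, hence `D = 0`. -/
lemma matPosPart_unique {A Y Z : Matrix (Fin n) (Fin n) ℂ} (hY : Y.PosSemidef)
    (hZ : Z.PosSemidef) (h : A = Y - Z) (hYZ : Y * Z = 0) : Y = matPosPart A := by
  have hA : A.IsHermitian := h ▸ hY.1.sub hZ.1
  have hP := matPosPart_posSemidef hA
  have hN := matPosPart_sub_posSemidef hA
  have hPN := matPosPart_mul_sub hA
  set P := matPosPart A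
  obtain ⟨N, hN_def⟩ : ∃ N, N = P - A := ⟨_, rfl⟩
  rw [← hN_def] at hN hPN
  have hD : Y - P = Z - N := by rw [hN_def, h]; abel
  have hDH : (Y - P).IsHermitian := hY.1.sub hP.1
  have h1 : (Y - P)ᴴ * (Y - P) = - (Y * N) - P * Z := by
    rw [hDH.eq]
    nth_rw 2 [hD]
    rw [Matrix.sub_mul, Matrix.mul_sub, Matrix.mul_sub, hYZ, hPN]; abel
  have h2 : ((Y - P)ᴴ * (Y - P)).trace = 0 := by
    apply le_antisymm
    · rw [h1, trace_sub, trace_neg]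
      have := add_nonneg (psd_trace_mul_nonneg hY hN) (psd_trace_mul_nonneg hP hZ)
      rw [sub_eq_add_neg, ← neg_add]
      exact neg_nonpos.mpr this
    · exact (posSemidef_conjTranspose_mul_self _).trace_nonneg
  rw [trace_conjTranspose_mul_self_eq_zero_iff] at h2
  exact sub_eq_zero.mp h2

lemma matPosPart_neg {A : Matrix (Fin n) (Fin n) ℂ} (hA : A.IsHermitian) :
    matPosPart (-A) = matPosPart A - A := by
  symm
  refine matPosPart_unique (Z := matPosPart A) (matPosPart_sub_posSemidef hA)
    (matPosPart_posSemidef hA) (by abel) ?_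
  exact mul_comm_zero (matPosPart_posSemidef hA).1 (matPosPart_sub_posSemidef hA).1
    (matPosPart_mul_sub hA)

/-- If `0 ≤ B ≤ C`, the range of `B` lies in that of `C`: with `G` the generalized inverse of `C`,
the projection `1 - C G` onto `ker C` annihilates `C`, hence `B`, so `B = C G B`. -/
lemma psd_range_le {B C : Matrix (Fin n) (Fin n) ℂ} (hB : B.PosSemidef)
    (hCB : (C - B).PosSemidef) : ∃ W, B = C * W := by
  have hC : C.PosSemidef := by simpa using hB.add hCB
  -- Since `0⁻¹ = 0` in Lean, inverting the eigenvalues gives the generalized inverse.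
  have hCG : C * hermFun hC.1 (fun x => x⁻¹) = hermFun hC.1 (fun x => x * x⁻¹) := by
    conv_lhs => enter [1]; rw [← hermFun_id hC.1]
    rw [hermFun_mul]; rfl
  set G := hermFun hC.1 (fun x => x⁻¹)
  have hq : 1 - C * G = hermFun hC.1 (fun x => 1 - x * x⁻¹) := by
    rw [hCG, ← hermFun_one hC.1, hermFun_sub]
  have hqpsd : (1 - C * G).PosSemidef := by
    rw [hq]
    exact hermFun_posSemidef hC.1 fun x => by by_cases hx : x = 0 <;> simp [hx]
  have hqC : (1 - C * G) * C = 0 := by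
    rw [hq]
    conv_lhs => enter [2]; rw [← hermFun_id hC.1]
    rw [hermFun_mul, ← hermFun_zero hC.1]
    congr 1; ext x
    by_cases hx : x = 0 <;> simp [hx]
  have hqB : (1 - C * G) * B = 0 := by
    apply psd_mul_left_of_add hqpsd hB hCB
    rw [add_sub_cancel, hqC]
  refine ⟨G * B, ?_⟩
  rw [Matrix.sub_mul, Matrix.one_mul, sub_eq_zero] at hqB
  rw [← Matrix.mul_assoc]; exact hqB

/-! ### The sequences `Xₘ` and `aₘ` -/

section sequences

variable {M : ℕ} {ρ : ℕ → Matrix (Fin n) (Fin n) ℂ}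

lemma Xseq_posSemidef (hρ : ∀ m < M, (ρ m).PosSemidef) :
    ∀ m < M, (Xseq ρ m).PosSemidef := by
  intro m
  induction m with
  | zero => exact fun h => hρ 0 h
  | succ m ih =>
    intro h
    exact (ih (by omega)).add (matPosPart_posSemidef ((hρ _ h).1.sub (ih (by omega)).1))

lemma Xseq_diff_isHermitian (hρ : ∀ m < M, (ρ m).PosSemidef) {m : ℕ} (h : m + 1 < M) :
    (Xseq ρ m - ρ (m + 1)).IsHermitian :=
  (Xseq_posSemidef hρ m (by omega)).1.sub (hρ _ h).1

lemma Xseq_succ_eq (hρ : ∀ m < M, (ρ m).PosSemidef) {m : ℕ} (h : m + 1 < M) :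
    Xseq ρ (m + 1) =
      Xseq ρ m + (matPosPart (Xseq ρ m - ρ (m + 1)) - (Xseq ρ m - ρ (m + 1))) := by
  rw [← matPosPart_neg (Xseq_diff_isHermitian hρ h), neg_sub]
  rfl

lemma Xseq_succ_eq' (hρ : ∀ m < M, (ρ m).PosSemidef) {m : ℕ} (h : m + 1 < M) :
    Xseq ρ (m + 1) = ρ (m + 1) + matPosPart (Xseq ρ m - ρ (m + 1)) := by
  rw [Xseq_succ_eq hρ h]; abel

lemma Xseq_sub_posSemidef (hρ : ∀ m < M, (ρ m).PosSemidef) :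
    ∀ m < M, ∀ k ≤ m, (Xseq ρ m - ρ k).PosSemidef := by
  intro m
  induction m with
  | zero =>
    intro _ k hk
    obtain rfl : k = 0 := by omega
    simpa [Xseq] using Matrix.PosSemidef.zero
  | succ m ih =>
    intro h k hk
    have hd := Xseq_diff_isHermitian hρ h
    rcases Nat.lt_or_ge m k with hk' | hk'
    · obtain rfl : k = m + 1 := by omega
      rw [Xseq_succ_eq' hρ h, add_sub_cancel_left]
      exact matPosPart_posSemidef hd
    · rw [Xseq_succ_eq hρ h, add_sub_right_comm]
      exact (ih (by omega) k hk').add (matPosPart_sub_posSemidef hd)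

lemma aseq_top : aseq M ρ (M - 1) = 1 := by
  simp [aseq, aAux]

lemma aseq_step {m : ℕ} (h : m + 1 < M) :
    aseq M ρ m = matProjNonneg (aseq M ρ (m + 1) * (Xseq ρ m - ρ (m + 1)) *
      (aseq M ρ (m + 1))ᴴ) * aseq M ρ (m + 1) := by
  unfold aseq
  obtain ⟨j, rfl⟩ : ∃ j, M = m + 2 + j := ⟨M - (m + 2), by omega⟩
  have h1 : m + 2 + j - 1 - m = j + 1 := by omega
  have h2 : m + 2 + j - 1 - (m + 1) = j := by omega
  have h3 : m + 2 + j - 1 - (j + 1) = m := by omega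
  have h4 : m + 2 + j - 1 - j = m + 1 := by omega
  rw [h1, h2, aAux, h3, h4]

end sequences

/-! ### Necessity: propagating complementary slackness downwards -/

lemma isHermitian_conj {a d : Matrix (Fin n) (Fin n) ℂ} (hd : d.IsHermitian) :
    (a * d * aᴴ).IsHermitian := isHermitian_mul_mul_conjTranspose a hd

/-- One downward step of the necessity direction. Let `d = X - r (m+1)`, and let `Q` be a POVM on
the outcomes `0, …, m+1` satisfying complementary slackness `Q k * (a (X + d₋ - r k) a†) = 0`. Then
`a d₊ a†` and `a d₋ a†` are orthogonal, so they are the positive and negative parts of `a d a†`.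
Under the support hypothesis `a (X + d₋) a† = a d a† V`, merging outcome `m+1` into outcome `0`
gives a POVM satisfying complementary slackness with `X` and `e a` in place of `X + d₋` and `a`,
where `e` projects onto the eigenvectors of `a d a†` with nonnegative eigenvalue. -/
lemma optimal_step {m : ℕ} {a X : Matrix (Fin n) (Fin n) ℂ} {r Q : ℕ → Matrix (Fin n) (Fin n) ℂ}
    (hr : ∀ k < m + 1, (r k).PosSemidef) (hX : ∀ k < m + 1, (X - r k).PosSemidef)
    (hd : (X - r (m + 1)).IsHermitian)
    (hQ : ∀ k < m + 2, (Q k).PosSemidef) (hQ1 : ∑ k ∈ Finset.range (m + 2), Q k = 1)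
    (hQ0 : ∀ k < m + 2, Q k * (a * (X + (matPosPart (X - r (m + 1)) - (X - r (m + 1))) - r k) * aᴴ)
      = 0)
    (hs : ∃ V, a * (X + (matPosPart (X - r (m + 1)) - (X - r (m + 1)))) * aᴴ =
      a * (X - r (m + 1)) * aᴴ * V) :
    a * matPosPart (X - r (m + 1)) * aᴴ = matPosPart (a * (X - r (m + 1)) * aᴴ) ∧
    ∃ Q' : ℕ → Matrix (Fin n) (Fin n) ℂ, (∀ k < m + 1, (Q' k).PosSemidef) ∧
      ∑ k ∈ Finset.range (m + 1), Q' k = 1 ∧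
      ∀ k < m + 1, Q' k * ((matProjNonneg (a * (X - r (m + 1)) * aᴴ) * a) * (X - r k) *
        (matProjNonneg (a * (X - r (m + 1)) * aᴴ) * a)ᴴ) = 0 := by
  set d := X - r (m + 1) with hd_def
  have hP := matPosPart_posSemidef hd
  have hN := matPosPart_sub_posSemidef hd
  set P := matPosPart d
  obtain ⟨N, hN_def⟩ : ∃ N, N = P - d := ⟨_, rfl⟩
  rw [← hN_def] at hN hQ0 hs
  have hY : (a * P * aᴴ).PosSemidef := hP.mul_mul_conjTranspose_same a
  have hZ : (a * N * aᴴ).PosSemidef := hN.mul_mul_conjTranspose_same a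
  have hB : ∀ k < m + 1, (a * (X - r k) * aᴴ).PosSemidef :=
    fun k hk => (hX k hk).mul_mul_conjTranspose_same a
  have hlast : Q (m + 1) * (a * P * aᴴ) = 0 := by
    have h := hQ0 (m + 1) (by omega)
    rwa [show X + N - r (m + 1) = P by rw [hN_def, hd_def]; abel] at h
  have hsplit : ∀ k, a * (X + N - r k) * aᴴ = a * (X - r k) * aᴴ + a * N * aᴴ := by
    intro k
    rw [← Matrix.add_mul, ← Matrix.mul_add]
    congr 2; abel
  have hQB : ∀ k < m + 1, Q k * (a * (X - r k) * aᴴ) = 0 := by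
    intro k hk
    apply psd_mul_left_of_add (hQ k (by omega)) (hB k hk) hZ
    rw [← hsplit]; exact hQ0 k (by omega)
  have hQZ : ∀ k < m + 1, Q k * (a * N * aᴴ) = 0 := by
    intro k hk
    apply psd_mul_left_of_add (hQ k (by omega)) hZ (hB k hk)
    rw [add_comm, ← hsplit]; exact hQ0 k (by omega)
  rw [Finset.sum_range_succ] at hQ1
  have hZQ : a * N * aᴴ = Q (m + 1) * (a * N * aᴴ) := by
    conv_lhs => rw [← Matrix.one_mul (a * N * aᴴ), ← hQ1, Matrix.add_mul, Finset.sum_mul]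
    rw [Finset.sum_eq_zero (fun k hk => hQZ k (Finset.mem_range.mp hk)), zero_add]
  have hYZ : a * P * aᴴ * (a * N * aᴴ) = 0 := by
    rw [hZQ, ← Matrix.mul_assoc, mul_comm_zero (hQ (m + 1) (by omega)).1 hY.1 hlast,
      Matrix.zero_mul]
  have hA : a * d * aᴴ = a * P * aᴴ - a * N * aᴴ := by
    rw [← Matrix.sub_mul, ← Matrix.mul_sub, hN_def, sub_sub_cancel]
  have hYP : a * P * aᴴ = matPosPart (a * d * aᴴ) := matPosPart_unique hY hZ hA hYZ
  have hAH : (a * d * aᴴ).IsHermitian := isHermitian_conj hd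
  have heA : matProjNonneg (a * d * aᴴ) * (a * d * aᴴ) = a * P * aᴴ := by
    rw [hYP]; exact matProjNonneg_mul hAH
  have heH := matProjNonneg_isHermitian hAH
  refine ⟨hYP, ?_⟩
  set e := matProjNonneg (a * d * aᴴ)
  obtain ⟨V, hV⟩ := hs
  have hW : ∀ k < m + 1, ∃ W, a * (X - r k) * aᴴ = a * d * aᴴ * W := by
    intro k hk
    obtain ⟨W, hW⟩ := psd_range_le (C := a * (X + N) * aᴴ) (hB k hk) (by
      rw [← Matrix.sub_mul, ← Matrix.mul_sub]
      apply Matrix.PosSemidef.mul_mul_conjTranspose_same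
      rw [show X + N - (X - r k) = N + r k by abel]
      exact hN.add (hr k hk))
    exact ⟨V * W, by rw [hW, hV, Matrix.mul_assoc]⟩
  have hconj : ∀ k, (e * a) * (X - r k) * (e * a)ᴴ = e * (a * (X - r k) * aᴴ) * e := by
    intro k
    rw [conjTranspose_mul, heH.eq]; simp only [Matrix.mul_assoc]
  have hQe : ∀ k < m + 1, Q k * (e * (a * (X - r k) * aᴴ)) = 0 := by
    intro k hk
    obtain ⟨W, hW⟩ := hW k hk
    have h0 := hQB k hk
    rw [hW, hA, Matrix.sub_mul, Matrix.mul_sub, ← Matrix.mul_assoc (Q k) (a * N * aᴴ), hQZ k hk,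
      Matrix.zero_mul, sub_zero] at h0
    rw [hW, ← Matrix.mul_assoc e, heA, h0]
  have hlaste : ∀ k < m + 1, Q (m + 1) * (e * (a * (X - r k) * aᴴ)) = 0 := by
    intro k hk
    obtain ⟨W, hW⟩ := hW k hk
    rw [hW, ← Matrix.mul_assoc e, heA, ← Matrix.mul_assoc, hlast, Matrix.zero_mul]
  refine ⟨fun k => Q k + if k = 0 then Q (m + 1) else 0, ?_, ?_, ?_⟩
  · intro k hk
    refine (hQ k (by omega)).add ?_
    split_ifs
    · exact hQ _ (by omega)
    · exact Matrix.PosSemidef.zero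
  · rw [Finset.sum_add_distrib, Finset.sum_ite_eq' (Finset.range (m + 1)) 0, if_pos (by simp)]
    exact hQ1
  · intro k hk
    rw [hconj, ← Matrix.mul_assoc, Matrix.add_mul, hQe k hk, zero_add]
    split_ifs
    · rw [hlaste k hk, Matrix.zero_mul]
    · simp

/-- The duality gap between `Tr X` and the value of a POVM `Q`. All its terms are nonnegative when
`X ≥ ρₘ` for every `m`. -/
lemma slack_eq {M : ℕ} {X : Matrix (Fin n) (Fin n) ℂ} {ρ Q : ℕ → Matrix (Fin n) (Fin n) ℂ}
    (hQ1 : ∑ m ∈ Finset.range M, Q m = 1) :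
    X.trace.re - ∑ m ∈ Finset.range M, (ρ m * Q m).trace.re =
      ∑ m ∈ Finset.range M, ((X - ρ m) * Q m).trace.re := by
  have h : X.trace.re = ∑ m ∈ Finset.range M, (X * Q m).trace.re := by
    rw [← Complex.re_sum, ← trace_sum, ← Finset.mul_sum, hQ1, Matrix.mul_one]
  rw [h, ← Finset.sum_sub_distrib]
  simp only [Matrix.sub_mul, trace_sub, Complex.sub_re]

/-! ### Sufficiency: the sequential measurement -/

/-- The sequential measurement: `Π₀ = a₀† a₀` and `Πₘ = aₘ† (1 - eₘ) aₘ` for `1 ≤ m < M`, the latter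
written as `aₘ† aₘ - aₘ₋₁† aₘ₋₁` so that the partial sums telescope. -/
noncomputable def seqPovm (M : ℕ) (ρ : ℕ → Matrix (Fin n) (Fin n) ℂ) :
    ℕ → Matrix (Fin n) (Fin n) ℂ
  | 0 => (aseq M ρ 0)ᴴ * aseq M ρ 0
  | m + 1 => (aseq M ρ (m + 1))ᴴ * aseq M ρ (m + 1) - (aseq M ρ m)ᴴ * aseq M ρ m

section seqPovm

variable {M : ℕ} {ρ : ℕ → Matrix (Fin n) (Fin n) ℂ}

lemma seqPovm_sum (m : ℕ) :
    ∑ k ∈ Finset.range (m + 1), seqPovm M ρ k = (aseq M ρ m)ᴴ * aseq M ρ m := by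
  induction m with
  | zero => simp [seqPovm]
  | succ m ih => rw [Finset.sum_range_succ, ih, seqPovm, add_sub_cancel]

lemma aseq_gram (hρ : ∀ m < M, (ρ m).PosSemidef) {m : ℕ} (h : m + 1 < M) :
    (aseq M ρ m)ᴴ * aseq M ρ m = (aseq M ρ (m + 1))ᴴ *
      matProjNonneg (aseq M ρ (m + 1) * (Xseq ρ m - ρ (m + 1)) * (aseq M ρ (m + 1))ᴴ) *
        aseq M ρ (m + 1) := by
  have hA := isHermitian_conj (a := aseq M ρ (m + 1)) (Xseq_diff_isHermitian hρ h)
  rw [aseq_step h, conjTranspose_mul, (matProjNonneg_isHermitian hA).eq]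
  nth_rw 3 [← matProjNonneg_sq hA]
  simp only [Matrix.mul_assoc]

lemma seqPovm_posSemidef (hρ : ∀ m < M, (ρ m).PosSemidef) {m : ℕ} (h : m < M) :
    (seqPovm M ρ m).PosSemidef := by
  cases m with
  | zero => exact posSemidef_conjTranspose_mul_self _
  | succ m =>
    have hA := isHermitian_conj (a := aseq M ρ (m + 1)) (Xseq_diff_isHermitian hρ h)
    rw [seqPovm, aseq_gram hρ h]
    have he := matProjNonneg_isHermitian hA
    have he2 := matProjNonneg_sq hA
    set a := aseq M ρ (m + 1)
    set e := matProjNonneg (a * (Xseq ρ m - ρ (m + 1)) * aᴴ)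
    have h1 : (1 - e)ᴴ * (1 - e) = 1 - e := by
      rw [conjTranspose_sub, he.eq, conjTranspose_one, Matrix.mul_sub, Matrix.sub_mul,
        Matrix.sub_mul, he2]
      simp
    have h2 : (1 - e).PosSemidef := h1 ▸ posSemidef_conjTranspose_mul_self (1 - e)
    have h3 : aᴴ * a - aᴴ * e * a = aᴴ * (1 - e) * a := by
      rw [Matrix.mul_sub, Matrix.sub_mul, Matrix.mul_one]
    rw [h3]
    exact h2.conjTranspose_mul_mul_same a

/-- Under the positive-part condition, the first `m+1` outcomes of the sequential measurement
contribute `Tr (Xₘ aₘ† aₘ)`. -/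
lemma seqPovm_value (hρ : ∀ m < M, (ρ m).PosSemidef)
    (hcond : ∀ m, m + 1 < M →
      aseq M ρ (m + 1) * matPosPart (Xseq ρ m - ρ (m + 1)) * (aseq M ρ (m + 1))ᴴ =
        matPosPart (aseq M ρ (m + 1) * (Xseq ρ m - ρ (m + 1)) * (aseq M ρ (m + 1))ᴴ)) :
    ∀ m < M, ∑ k ∈ Finset.range (m + 1), (ρ k * seqPovm M ρ k).trace =
      (Xseq ρ m * ((aseq M ρ m)ᴴ * aseq M ρ m)).trace := by
  intro m
  induction m with
  | zero => intro _; simp [seqPovm, Xseq]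
  | succ m ih =>
    intro h
    have hA := isHermitian_conj (a := aseq M ρ (m + 1)) (Xseq_diff_isHermitian hρ h)
    have hc := congrArg trace (hcond m h)
    rw [← matProjNonneg_mul hA] at hc
    rw [Finset.sum_range_succ, ih (by omega), seqPovm, Xseq_succ_eq' hρ h, aseq_gram hρ h]
    set a := aseq M ρ (m + 1)
    set e := matProjNonneg (a * (Xseq ρ m - ρ (m + 1)) * aᴴ)
    have h1 : (a * matPosPart (Xseq ρ m - ρ (m + 1)) * aᴴ).trace =
        (matPosPart (Xseq ρ m - ρ (m + 1)) * (aᴴ * a)).trace := by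
      rw [Matrix.mul_assoc, Matrix.trace_mul_comm, Matrix.mul_assoc]
    have h2 : (e * (a * (Xseq ρ m - ρ (m + 1)) * aᴴ)).trace =
        ((Xseq ρ m - ρ (m + 1)) * (aᴴ * e * a)).trace := by
      rw [Matrix.mul_assoc a, ← Matrix.mul_assoc e, Matrix.trace_mul_comm]
      simp only [Matrix.mul_assoc]
    rw [h1, h2] at hc
    rw [Matrix.add_mul, trace_add, hc]
    simp only [Matrix.mul_sub, Matrix.sub_mul, trace_sub]
    ring

end seqPovm

/-! ### The equivalence -/

lemma exists_mul_of_range_le {A C : Matrix (Fin n) (Fin n) ℂ}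
    (h : LinearMap.range C.mulVecLin ≤ LinearMap.range A.mulVecLin) : ∃ V, C = A * V := by
  have h1 : ∀ j, ∃ v, A *ᵥ v = C *ᵥ Pi.single j 1 := fun j => h ⟨Pi.single j 1, rfl⟩
  choose v hv using h1
  refine ⟨Matrix.of fun i j => v j i, ?_⟩
  ext i j
  have := congrFun (hv j) i
  rw [mulVec_single_one] at this
  exact this.symm

/-- Under the support assumption
`supp(a_m (X_{m-1} − ρ_m) a_m†) = supp(a_m X_m a_m†)` for `1 ≤ m ≤ M−1`, one has
`P_C^up = P_C^opt` iff `a_m (X_{m-1} − ρ_m)₊ a_m† = (a_m (X_{m-1} − ρ_m) a_m†)₊`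
for every `m = 1, …, M−2`. -/
theorem stmt_6 {n M : ℕ} (hM : 0 < M) (ρ : ℕ → Matrix (Fin n) (Fin n) ℂ)
    (hρ : ∀ m < M, (ρ m).PosSemidef)
    (hρpos : ∀ m < M, 0 < (ρ m).trace.re)
    (hρsum : ∑ m ∈ Finset.range M, (ρ m).trace.re = 1)
    (hsupp : ∀ m, 1 ≤ m → m ≤ M - 1 →
      LinearMap.range (aseq M ρ m * (Xseq ρ (m - 1) - ρ m) * (aseq M ρ m)ᴴ).mulVecLin =
        LinearMap.range (aseq M ρ m * Xseq ρ m * (aseq M ρ m)ᴴ).mulVecLin) :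
    IsGreatest {x : ℝ | ∃ Pm : ℕ → Matrix (Fin n) (Fin n) ℂ,
        (∀ m < M, (Pm m).PosSemidef) ∧ (∑ m ∈ Finset.range M, Pm m = 1) ∧
        x = ∑ m ∈ Finset.range M, ((ρ m * Pm m).trace).re}
      ((Xseq ρ (M - 1)).trace.re) ↔
    ∀ m, 1 ≤ m → m ≤ M - 2 →
      aseq M ρ m * matPosPart (Xseq ρ (m - 1) - ρ m) * (aseq M ρ m)ᴴ =
        matPosPart (aseq M ρ m * (Xseq ρ (m - 1) - ρ m) * (aseq M ρ m)ᴴ) := by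
  have hX : ∀ k < M, (Xseq ρ (M - 1) - ρ k).PosSemidef :=
    fun k hk => Xseq_sub_posSemidef hρ (M - 1) (by omega) k (by omega)
  constructor
  · rintro ⟨⟨Q, hQ, hQ1, hval⟩, -⟩
    have hslack := slack_eq (X := Xseq ρ (M - 1)) (ρ := ρ) hQ1
    rw [← hval, sub_self, eq_comm, Finset.sum_eq_zero_iff_of_nonneg fun k hk =>
      psd_trace_mul_re_nonneg (hX k (Finset.mem_range.mp hk)) (hQ k (Finset.mem_range.mp hk))]
      at hslack
    -- `P m`: some POVM with outcomes `0, …, m` satisfies complementary slackness for `aₘ Xₘ aₘ†`.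
    let P : ℕ → Prop := fun m => ∃ Q : ℕ → Matrix (Fin n) (Fin n) ℂ,
      (∀ k < m + 1, (Q k).PosSemidef) ∧ ∑ k ∈ Finset.range (m + 1), Q k = 1 ∧
      ∀ k < m + 1, Q k * (aseq M ρ m * (Xseq ρ m - ρ k) * (aseq M ρ m)ᴴ) = 0
    have hstep : ∀ m, m + 1 < M → P (m + 1) →
        aseq M ρ (m + 1) * matPosPart (Xseq ρ m - ρ (m + 1)) * (aseq M ρ (m + 1))ᴴ =
          matPosPart (aseq M ρ (m + 1) * (Xseq ρ m - ρ (m + 1)) * (aseq M ρ (m + 1))ᴴ) ∧ P m := by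
      rintro m hm ⟨Q, hQ, hQ1, hQ0⟩
      have hs := exists_mul_of_range_le (hsupp (m + 1) (by omega) (by omega)).ge
      rw [Nat.add_sub_cancel, Xseq_succ_eq hρ hm] at hs
      rw [Xseq_succ_eq hρ hm] at hQ0
      have := optimal_step (fun k hk => hρ k (by omega))
        (fun k hk => Xseq_sub_posSemidef hρ m (by omega) k (by omega))
        (Xseq_diff_isHermitian hρ hm) hQ hQ1 hQ0 hs
      rw [← aseq_step hm] at this
      exact this
    have hP : ∀ j m, m + j = M - 1 → P m := by
      intro j
      induction j with
      | zero =>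
        intro m hm
        obtain rfl : m = M - 1 := by omega
        refine ⟨Q, fun k hk => hQ k (by omega), ?_, fun k hk => ?_⟩
        · rwa [Nat.sub_add_cancel hM]
        · have hk' : k < M := by omega
          rw [aseq_top, Matrix.one_mul, conjTranspose_one, Matrix.mul_one]
          exact mul_comm_zero (hX k hk').1 (hQ k hk').1
            (psd_mul_eq_zero (hX k hk') (hQ k hk') (hslack k (Finset.mem_range.mpr hk')))
      | succ j ih =>
        intro m hm
        exact (hstep m (by omega) (ih (m + 1) (by omega))).2
    intro m hm1 hm2
    obtain ⟨m, rfl⟩ : ∃ l, m = l + 1 := ⟨m - 1, by omega⟩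
    exact (hstep m (by omega) (hP (M - 1 - (m + 1)) (m + 1) (by omega))).1
  · intro hcond
    -- At `m + 1 = M - 1` the condition is automatic, since `a_{M-1} = 1`.
    have hcond' : ∀ m, m + 1 < M →
        aseq M ρ (m + 1) * matPosPart (Xseq ρ m - ρ (m + 1)) * (aseq M ρ (m + 1))ᴴ =
          matPosPart (aseq M ρ (m + 1) * (Xseq ρ m - ρ (m + 1)) * (aseq M ρ (m + 1))ᴴ) := by
      intro m hm
      by_cases h : m + 1 ≤ M - 2
      · exact hcond (m + 1) (by omega) h
      · rw [show m + 1 = M - 1 by omega, aseq_top]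
        simp
    constructor
    · refine ⟨seqPovm M ρ, fun m hm => seqPovm_posSemidef hρ hm, ?_, ?_⟩
      · have := seqPovm_sum (M := M) (ρ := ρ) (M - 1)
        rwa [Nat.sub_add_cancel hM, aseq_top, conjTranspose_one, Matrix.mul_one] at this
      · have := seqPovm_value hρ hcond' (M - 1) (by omega)
        rw [Nat.sub_add_cancel hM, aseq_top, conjTranspose_one, Matrix.mul_one,
          Matrix.mul_one] at this
        rw [← this, Complex.re_sum]
    · rintro x ⟨Q, hQ, hQ1, rfl⟩
      have hslack := slack_eq (X := Xseq ρ (M - 1)) (ρ := ρ) hQ1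
      have := Finset.sum_nonneg fun k (hk : k ∈ Finset.range M) =>
        psd_trace_mul_re_nonneg (hX k (Finset.mem_range.mp hk)) (hQ k (Finset.mem_range.mp hk))
      linarith
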